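/- Let N, M ∈ ℕ, let G be an N×N complex matrix, let G̃ be an M×N complex matrix, let u_in ∈ ℂ^N and y ∈ ℂ^M. For f ∈ ℝ^N with I − G·diag(f) invertible, set u(f) = (I − G·diag(f))⁻¹ u_in, h(f) = diag(f)·u(f), and define the data-fidelity D(f) = (1/2)·‖G̃·h(f) − y‖₂². Then at any such f, the function D : ℝ^N → ℝ is differentiable, and its gradient is ∇D(f) = Re( J_h(f)^H · G̃^H · (G̃·diag(f)·u(f) − y) ), where J_h(f) = (I + diag(f)·(I − G·diag(f))⁻¹·G)·diag(u(f)) and ^H denotes the conjugate transpose. -/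

import Mathlib

open Matrix

/-- `diagC f` : the N×N complex diagonal matrix with the (real) entries of `f`
on the diagonal. -/
noncomputable def diagC {N : ℕ} (f : Fin N → ℝ) : Matrix (Fin N) (Fin N) ℂ :=
  Matrix.diagonal fun i => (f i : ℂ)

/-- The total field `u(f) = (I − G·diag(f))⁻¹ u_in` of the discrete
Lippmann–Schwinger equation. -/
noncomputable def totalField {N : ℕ} (G : Matrix (Fin N) (Fin N) ℂ)
    (uin : Fin N → ℂ) (f : Fin N → ℝ) : Fin N → ℂ :=
  (1 - G * diagC f)⁻¹ *ᵥ uin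

/-- `h(f) = diag(f)·u(f)`. -/
noncomputable def hMap {N : ℕ} (G : Matrix (Fin N) (Fin N) ℂ)
    (uin : Fin N → ℂ) (f : Fin N → ℝ) : Fin N → ℂ :=
  diagC f *ᵥ totalField G uin f

/-- The data-fidelity term `D(f) = (1/2)·‖G̃·h(f) − y‖₂²`. -/
noncomputable def dataFid {N M : ℕ} (G : Matrix (Fin N) (Fin N) ℂ)
    (Gt : Matrix (Fin M) (Fin N) ℂ) (uin : Fin N → ℂ) (y : Fin M → ℂ)
    (f : Fin N → ℝ) : ℝ :=
  (1 / 2) * ∑ m, Complex.normSq ((Gt *ᵥ hMap G uin f - y) m)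

/-- The Jacobian matrix `J_h(f) = (I + diag(f)·(I − G·diag(f))⁻¹·G)·diag(u(f))`. -/
noncomputable def jacH {N : ℕ} (G : Matrix (Fin N) (Fin N) ℂ)
    (uin : Fin N → ℂ) (f : Fin N → ℝ) : Matrix (Fin N) (Fin N) ℂ :=
  (1 + diagC f * (1 - G * diagC f)⁻¹ * G) * Matrix.diagonal (totalField G uin f)

section aux
attribute [local instance] Matrix.linftyOpNormedRing Matrix.linftyOpNormedAlgebra

/-- `diagC` as a real-linear map. -/
noncomputable def diagCLin (N : ℕ) : (Fin N → ℝ) →ₗ[ℝ] Matrix (Fin N) (Fin N) ℂ where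
  toFun := diagC
  map_add' a b := by
    ext i j; by_cases h : i = j <;> simp [diagC, Matrix.diagonal, h]
  map_smul' c a := by
    ext i j; by_cases h : i = j <;> simp [diagC, Matrix.diagonal, h]

/-- `A ↦ A *ᵥ w` as a real-linear map. -/
noncomputable def mulVecLin' {N : ℕ} (w : Fin N → ℂ) :
    Matrix (Fin N) (Fin N) ℂ →ₗ[ℝ] (Fin N → ℂ) where
  toFun A := A *ᵥ w
  map_add' a b := Matrix.add_mulVec a b w
  map_smul' c a := by simp [Matrix.smul_mulVec]

lemma hMap_hasFDerivAt {N : ℕ} (G : Matrix (Fin N) (Fin N) ℂ) (uin : Fin N → ℂ)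
    (f : Fin N → ℝ) (hinv : IsUnit (1 - G * diagC f)) :
    ∃ L : (Fin N → ℝ) →L[ℝ] (Fin N → ℂ), HasFDerivAt (hMap G uin) L f ∧
      ∀ v, L v = jacH G uin f *ᵥ (fun i => (v i : ℂ)) := by
  have hd : HasFDerivAt (fun g : Fin N → ℝ => diagC g)
      (LinearMap.toContinuousLinearMap (diagCLin N)) f :=
    (LinearMap.toContinuousLinearMap (diagCLin N)).hasFDerivAt
  have hA : HasFDerivAt (fun g : Fin N → ℝ => 1 - G * diagC g) _ f :=
    (hd.const_mul G).const_sub 1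
  obtain ⟨x, hx⟩ := hinv
  have hI := hasFDerivAt_ringInverse (𝕜 := ℝ) x
  rw [hx] at hI
  have hB := hd.mul' (hI.comp f hA)
  have hC := ((LinearMap.toContinuousLinearMap (mulVecLin' uin)).hasFDerivAt).comp f hB
  refine ⟨_, hC.congr_of_eventuallyEq (Filter.Eventually.of_forall fun g => ?_), fun v => ?_⟩
  · simp [hMap, totalField, mulVecLin', Matrix.nonsing_inv_eq_ringInverse, Function.comp_def]
  · have hxi : ((x⁻¹ : (Matrix (Fin N) (Fin N) ℂ)ˣ) : Matrix (Fin N) (Fin N) ℂ)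
        = (1 - G * diagC f)⁻¹ := by
      rw [← hx, Matrix.coe_units_inv]
    have hu : Matrix.diagonal (totalField G uin f) *ᵥ (fun i => (v i : ℂ))
        = diagC v *ᵥ totalField G uin f := by
      ext i; simp [diagC, Matrix.mulVec_diagonal, mul_comm]
    have e : jacH G uin f *ᵥ (fun i => (v i : ℂ))
      = (1 + diagC f * (1 - G * diagC f)⁻¹ * G) *ᵥ (diagC v *ᵥ totalField G uin f) := by
      rw [← hu, jacH, Matrix.mulVec_mulVec]
    rw [e, totalField, Matrix.mulVec_mulVec, Matrix.mulVec_mulVec]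
    change (diagC f * ((-((ContinuousLinearMap.mulLeftRight ℝ (Matrix (Fin N) (Fin N) ℂ))
      ((x⁻¹ : (Matrix (Fin N) (Fin N) ℂ)ˣ) : Matrix (Fin N) (Fin N) ℂ))
      ((x⁻¹ : (Matrix (Fin N) (Fin N) ℂ)ˣ) : Matrix (Fin N) (Fin N) ℂ)) (-(G * diagC v)))
      + diagC v * Ring.inverse (1 - G * diagC f)) *ᵥ uin = _
    rw [← Matrix.nonsing_inv_eq_ringInverse, hxi]
    congr 1
    rw [ContinuousLinearMap.neg_apply, ContinuousLinearMap.mulLeftRight_apply]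
    noncomm_ring
end aux

theorem gradient_of_data_fidelity
    (N M : ℕ) (G : Matrix (Fin N) (Fin N) ℂ) (Gt : Matrix (Fin M) (Fin N) ℂ)
    (uin : Fin N → ℂ) (y : Fin M → ℂ)
    (f : Fin N → ℝ) (hinv : IsUnit (1 - G * diagC f)) :
    DifferentiableAt ℝ (dataFid G Gt uin y) f ∧
    ∀ v : Fin N → ℝ,
      fderiv ℝ (dataFid G Gt uin y) f v
        = ∑ n, (((jacH G uin f)ᴴ *ᵥ
              (Gtᴴ *ᵥ (Gt *ᵥ (diagC f *ᵥ totalField G uin f) - y))) n).re * v n := by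
  obtain ⟨L, hL, hLv⟩ := hMap_hasFDerivAt G uin f hinv
  let T : (Fin N → ℂ) →L[ℝ] (Fin M → ℂ) :=
    LinearMap.toContinuousLinearMap ((Matrix.mulVecLin Gt).restrictScalars ℝ)
  have hr : HasFDerivAt (fun g => Gt *ᵥ hMap G uin g - y) (T.comp L) f :=
    (T.hasFDerivAt.comp f hL).sub_const y
  have hm : ∀ m, HasFDerivAt (fun g => (Gt *ᵥ hMap G uin g - y) m)
      ((ContinuousLinearMap.proj m).comp (T.comp L)) f := hasFDerivAt_pi'.1 hr
  have hre := fun m => (Complex.reCLM.hasFDerivAt.comp f (hm m))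
  have him := fun m => (Complex.imCLM.hasFDerivAt.comp f (hm m))
  have hD := (HasFDerivAt.fun_sum (u := Finset.univ)
    fun m _ => ((hre m).mul (hre m)).add ((him m).mul (him m))).const_mul (1/2 : ℝ)
  have hD' := hD.congr_of_eventuallyEq (f₁ := dataFid G Gt uin y)
    (Filter.Eventually.of_forall fun g => by simp [dataFid, Complex.normSq_apply])
  refine ⟨hD'.differentiableAt, fun v => ?_⟩
  rw [hD'.fderiv]
  have hTL : ∀ m, T (L v) m = (Gt *ᵥ (jacH G uin f *ᵥ (fun i => (v i : ℂ)))) m := by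
    intro m; rw [hLv]; rfl
  set w := Gt *ᵥ hMap G uin f - y with hw
  have hw' : Gt *ᵥ (diagC f *ᵥ totalField G uin f) - y = w := rfl
  rw [hw']
  have key : ∑ n, (((jacH G uin f)ᴴ *ᵥ (Gtᴴ *ᵥ w)) n).re * v n
      = (star (Gt *ᵥ (jacH G uin f *ᵥ (fun i => (v i : ℂ)))) ⬝ᵥ w).re := by
    have : star (Gt *ᵥ (jacH G uin f *ᵥ (fun i => (v i : ℂ)))) ⬝ᵥ w
        = (fun i => (v i : ℂ)) ⬝ᵥ ((jacH G uin f)ᴴ *ᵥ (Gtᴴ *ᵥ w)) := by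
      rw [Matrix.star_mulVec, Matrix.star_mulVec, ← Matrix.dotProduct_mulVec,
        ← Matrix.dotProduct_mulVec]
      congr 1
      ext i; simp
    rw [this]
    simp [dotProduct, mul_comm]
  rw [key]
  simp [hTL, dotProduct, Finset.mul_sum]
  refine Finset.sum_congr rfl fun m _ => ?_
  rw [hw]
  simp only [Pi.sub_apply, Complex.sub_re, Complex.sub_im]
  ring
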